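/- Let D ≥ 2 and r ≥ 3 be integers. Then |I_{⌊Dr/4⌋, ⌊Dr/4⌋, 0}| > (1/(√2·π·D))·√((r−2)/(r+2))·((r+2)^{r+2}/(r−2)^{r−2})^{D/4}·exp(−(5/(24D))·(r²+4)/(r²−4)). -/

import Mathlib

/-!
Classifying the vectors of `I_{s,s,0}` by their set of positive coordinates gives
`|I_{s,s,0}| = ∑ k, C(D, k) ^ 2 * C(s + (D - k), D)`. With weights `C(D, k) ^ 2 / C(2D, D)` the mean
of `s + (D - k)` is `s + D / 2`, so Jensen's inequality for the descending Pochhammer polynomial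
bounds the cardinality below by `C(2D, D) / D!` times the product of the `D` numbers
`s + D / 2, s + D / 2 - 1, …`, the last of which exceeds `D(r - 2)/4` for `s = ⌊Dr/4⌋`. All three
factors are estimated by Stirling's formula with its `1 / (12 x)` correction: `C(2D, D)` and `D!`
cost `1 / (8D) + 1 / (12D) = 5 / (24D)` in the exponent, and the product costs
`4 / (3D(r ^ 2 - 4))`, less than the `5 / (3D(r ^ 2 - 4))` that the stated bound leaves for it.
-/

open Finset Filter Topology
open scoped Nat

section Counting
variable {ι : Type*} [Fintype ι]

lemma ncard_sum_le (n : ℕ) :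
    {a : ι → ℕ | ∑ i, a i ≤ n}.ncard = (n + Fintype.card ι).choose (Fintype.card ι) := by
  classical
  have himage : (fun (f : Option ι → ℕ) i => f (some i)) '' {f | ∑ i, f i = n} =
      {a : ι → ℕ | ∑ i, a i ≤ n} := by
    ext a
    simp only [Set.mem_image, Set.mem_ofPred_eq, Fintype.sum_option]
    refine ⟨?_, fun ha => ⟨fun i => i.elim (n - ∑ i, a i) a, Nat.sub_add_cancel ha, rfl⟩⟩
    rintro ⟨f, hf, rfl⟩
    exact hf ▸ Nat.le_add_left _ _
  have hinj : Set.InjOn (fun (f : Option ι → ℕ) i => f (some i)) {f | ∑ i, f i = n} := by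
    intro f hf g hg hfg
    have hsome : ∀ i, f (some i) = g (some i) := congrFun hfg
    simp only [Set.mem_ofPred_eq, Fintype.sum_option, hsome] at hf hg
    funext i
    cases i with
    | none => omega
    | some i => exact hsome i
  rw [← himage, hinj.ncard_image, ← Nat.card_coe_set_eq]
  refine (Nat.card_congr (Sym.equivNatSumOfFintype (Option ι) n)).symm.trans ?_
  rw [Nat.card_eq_fintype_card, Sym.card_sym_eq_choose, Fintype.card_option, ← Nat.choose_symm_add]
  congr 1
  omega

lemma ncard_forall_pos_sum_le (n : ℕ) :
    {v : ι → ℤ | (∀ i, 0 < v i) ∧ ∑ i, v i ≤ n}.ncard = n.choose (Fintype.card ι) := by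
  have himage : (fun (a : ι → ℕ) i => (a i : ℤ) + 1) '' {a | ∑ i, a i + Fintype.card ι ≤ n} =
      {v : ι → ℤ | (∀ i, 0 < v i) ∧ ∑ i, v i ≤ n} := by
    ext v
    constructor
    · rintro ⟨a, ha, rfl⟩
      refine ⟨fun i => by positivity, ?_⟩
      simp only [sum_add_distrib, sum_const, card_univ, nsmul_eq_mul, mul_one]
      exact_mod_cast ha
    · rintro ⟨hpos, hsum⟩
      lift v to ι → ℕ using fun i => (hpos i).le
      have hv : ∀ i, ((v i - 1 : ℕ) : ℤ) + 1 = v i := fun i => by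
        have : 0 < (v i : ℤ) := hpos i
        omega
      refine ⟨fun i => v i - 1, ?_, funext hv⟩
      have hcard : ∑ i, ((v i - 1 : ℕ) : ℤ) + Fintype.card ι = ∑ i, (v i : ℤ) := by
        simp only [← hv, sum_add_distrib, sum_const, card_univ, nsmul_eq_mul, mul_one]
      exact_mod_cast hcard.trans_le hsum
  rw [← himage, Set.ncard_image_of_injective _ fun a b hab => funext fun i => by
    simpa using congrFun hab i]
  rcases le_or_gt (Fintype.card ι) n with hn | hn
  · simp only [← Nat.le_sub_iff_add_le hn, ncard_sum_le, Nat.sub_add_cancel hn]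
  · have hempty : {a : ι → ℕ | ∑ i, a i + Fintype.card ι ≤ n} = ∅ :=
      Set.eq_empty_of_forall_notMem fun a ha => by
        have : ∑ i, a i + Fintype.card ι ≤ n := ha
        omega
    rw [hempty, Set.ncard_empty, Nat.choose_eq_zero_of_lt hn]

lemma ncard_forall_nonpos_sum_neg_le (n : ℕ) :
    {v : ι → ℤ | (∀ i, v i ≤ 0) ∧ ∑ i, -v i ≤ n}.ncard =
      (n + Fintype.card ι).choose (Fintype.card ι) := by
  have himage : (fun (a : ι → ℕ) i => -(a i : ℤ)) '' {a | ∑ i, a i ≤ n} =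
      {v : ι → ℤ | (∀ i, v i ≤ 0) ∧ ∑ i, -v i ≤ n} := by
    ext v
    constructor
    · rintro ⟨a, ha, rfl⟩
      refine ⟨fun i => by simp, ?_⟩
      simp only [neg_neg]
      exact_mod_cast ha
    · rintro ⟨hneg, hsum⟩
      obtain ⟨a, rfl⟩ : ∃ a : ι → ℕ, (fun i => -(a i : ℤ)) = v :=
        ⟨fun i => (v i).natAbs, funext fun i => by simp [abs_of_nonpos (hneg i)]⟩
      simp only [neg_neg] at hsum
      exact ⟨a, by exact_mod_cast hsum, rfl⟩
  rw [← himage, Set.ncard_image_of_injective _ fun a b hab => funext fun i => by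
    simpa using congrFun hab i, ncard_sum_le]

variable (ι) in
/-- The set `I_{s,t,0}` of integer vectors, indexed by `ι`, whose positive entries sum to at most
`s` and whose negative entries sum to at least `-t`; the positive and negative parts of an entry are
written with `max`. -/
def signedSumBox (s t : ℕ) : Set (ι → ℤ) :=
  {u | ∑ j, max (u j) 0 ≤ s ∧ ∑ j, max (-u j) 0 ≤ t}

lemma finite_signedSumBox (s t : ℕ) : (signedSumBox ι s t).Finite := by
  classical
  refine (Set.finite_Icc (fun _ => -(t : ℤ)) (fun _ => (s : ℤ))).subset fun u hu => ⟨?_, ?_⟩ <;>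
    intro j
  · have := single_le_sum (fun i _ => le_max_right (-u i) 0) (mem_univ j)
    linarith [le_max_left (-u j) 0, hu.2]
  · have := single_le_sum (fun i _ => le_max_right (u i) 0) (mem_univ j)
    linarith [le_max_left (u j) 0, hu.1]

lemma sum_max_zero_eq_sum_subtype {S : Finset ι} {u : ι → ℤ} (hpos : ∀ j ∈ S, 0 < u j)
    (hnonpos : ∀ j ∉ S, u j ≤ 0) : ∑ j, max (u j) 0 = ∑ j : {j // j ∈ S}, u j := by
  rw [← sum_subset S.subset_univ fun j _ hj => max_eq_right (hnonpos j hj), sum_coe_sort S u]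
  exact sum_congr rfl fun j hj => max_eq_left (hpos j hj).le

lemma sum_max_neg_zero_eq_sum_subtype [DecidableEq ι] {S : Finset ι} {u : ι → ℤ}
    (hpos : ∀ j ∈ S, 0 < u j) (hnonpos : ∀ j ∉ S, u j ≤ 0) :
    ∑ j, max (-u j) 0 = ∑ j : {j // j ∉ S}, -u j := by
  have hzero : ∑ j ∈ S, max (-u j) 0 = 0 :=
    sum_eq_zero fun j hj => max_eq_right (by linarith [hpos j hj])
  rw [← sum_compl_add_sum S, hzero, add_zero, ← sum_subtype Sᶜ (by simp) (fun j => -u j)]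
  exact sum_congr rfl fun j hj => max_eq_left (by simpa using hnonpos j (by simpa using hj))

lemma ncard_signedSumBox_filter_pos_eq (s t : ℕ) (S : Finset ι) :
    {u ∈ signedSumBox ι s t | univ.filter (0 < u ·) = S}.ncard =
      s.choose #S * (t + (Fintype.card ι - #S)).choose (Fintype.card ι - #S) := by
  classical
  let e := Equiv.piEquivPiSubtypeProd (· ∈ S) fun _ : ι => ℤ
  let P : Set ({j // j ∈ S} → ℤ) := {v | (∀ j, 0 < v j) ∧ ∑ j, v j ≤ s}
  let N : Set ({j // j ∉ S} → ℤ) := {v | (∀ j, v j ≤ 0) ∧ ∑ j, -v j ≤ t}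
  have hpreimage : {u ∈ signedSumBox ι s t | univ.filter (0 < u ·) = S} = e ⁻¹' (P ×ˢ N) := by
    ext u
    have hsupport : univ.filter (0 < u ·) = S ↔ (∀ j ∈ S, 0 < u j) ∧ ∀ j ∉ S, u j ≤ 0 := by
      simp only [Finset.ext_iff, mem_filter_univ, iff_def, forall_and, ← not_lt, not_imp_not,
        and_comm]
    simp only [Set.mem_ofPred_eq, hsupport, Set.mem_preimage, Set.mem_prod, P, N, e, signedSumBox,
      Equiv.piEquivPiSubtypeProd_apply, Subtype.forall]
    constructor
    · rintro ⟨⟨hs, ht⟩, hpos, hnonpos⟩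
      rw [sum_max_zero_eq_sum_subtype hpos hnonpos] at hs
      rw [sum_max_neg_zero_eq_sum_subtype hpos hnonpos] at ht
      exact ⟨⟨hpos, hs⟩, hnonpos, ht⟩
    · rintro ⟨⟨hpos, hs⟩, hnonpos, ht⟩
      rw [sum_max_zero_eq_sum_subtype hpos hnonpos, sum_max_neg_zero_eq_sum_subtype hpos hnonpos]
      exact ⟨⟨hs, ht⟩, hpos, hnonpos⟩
  rw [hpreimage, Set.ncard_preimage_of_injective_subset_range e.injective (by simp), Set.ncard_prod,
    ncard_forall_pos_sum_le, ncard_forall_nonpos_sum_neg_le, Fintype.card_subtype_compl,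
    Fintype.card_coe]

lemma ncard_signedSumBox (s t : ℕ) :
    (signedSumBox ι s t).ncard =
      ∑ k ∈ range (Fintype.card ι + 1), (Fintype.card ι).choose k *
        (s.choose k * (t + (Fintype.card ι - k)).choose (Fintype.card ι - k)) := by
  classical
  have hfin := finite_signedSumBox (ι := ι) s t
  rw [Set.ncard_eq_toFinset_card _ hfin,
    card_eq_sum_card_fiberwise (f := fun u : ι → ℤ => univ.filter (0 < u ·)) (t := univ.powerset)
      fun u _ => by simp]
  have hfiber (S : Finset ι) : #{u ∈ hfin.toFinset | univ.filter (0 < u ·) = S} =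
      s.choose #S * (t + (Fintype.card ι - #S)).choose (Fintype.card ι - #S) := by
    rw [← ncard_signedSumBox_filter_pos_eq, ← Set.ncard_coe_finset]
    simp only [coe_filter, Set.Finite.mem_toFinset]
  simp only [hfiber, sum_powerset_apply_card
    (fun k => s.choose k * (t + (Fintype.card ι - k)).choose (Fintype.card ι - k)), card_univ,
    smul_eq_mul]

lemma ncard_signedSumBox_self (s : ℕ) :
    (signedSumBox ι s s).ncard = ∑ k ∈ range (Fintype.card ι + 1),
      (Fintype.card ι).choose k ^ 2 * (s + (Fintype.card ι - k)).choose (Fintype.card ι) := by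
  rw [ncard_signedSumBox]
  refine sum_congr rfl fun k hk => ?_
  have hk : k ≤ Fintype.card ι := mem_range_succ_iff.1 hk
  have htrinomial := Nat.choose_mul (n := s + (Fintype.card ι - k)) (Nat.sub_le (Fintype.card ι) k)
  rw [Nat.choose_symm hk, Nat.add_sub_cancel, Nat.sub_sub_self hk] at htrinomial
  rw [mul_comm (s.choose k), ← htrinomial]
  ring

end Counting

lemma two_mul_sum_range_choose_sq_mul_sub (n : ℕ) :
    2 * ∑ k ∈ range (n + 1), n.choose k ^ 2 * (n - k) = n * n.centralBinom := by
  have hreflect : ∑ k ∈ range (n + 1), n.choose k ^ 2 * (n - k) =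
      ∑ k ∈ range (n + 1), n.choose k ^ 2 * k := by
    rw [← sum_range_reflect]
    refine sum_congr rfl fun k hk => ?_
    have hk : k ≤ n := mem_range_succ_iff.1 hk
    rw [Nat.add_sub_cancel, Nat.choose_symm hk, Nat.sub_sub_self hk]
  rw [two_mul]
  nth_rw 2 [hreflect]
  rw [← sum_add_distrib, Nat.centralBinom, ← Nat.sum_range_choose_sq, mul_sum]
  refine sum_congr rfl fun k hk => ?_
  rw [← mul_add, Nat.sub_add_cancel (mem_range_succ_iff.1 hk), mul_comm]

lemma centralBinom_mul_descPochhammer_div_factorial_le {n s : ℕ} (hn : n ≠ 0)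
    (hs : n ≤ 2 * (s + 1)) :
    n.centralBinom * ((descPochhammer ℝ n).eval (s + n / 2 : ℝ) / n !) ≤
      ∑ k ∈ range (n + 1), (n.choose k : ℝ) ^ 2 * (s + (n - k)).choose n := by
  have hC : (0 : ℝ) < n.centralBinom := by exact_mod_cast n.centralBinom_pos
  have hsum : ∑ k ∈ range (n + 1), (n.choose k : ℝ) ^ 2 = n.centralBinom := by
    exact_mod_cast Nat.sum_range_choose_sq n
  have hsum_mul : ∑ k ∈ range (n + 1), (n.choose k : ℝ) ^ 2 * (n - k : ℕ) =
      n * n.centralBinom / 2 := by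
    rw [eq_div_iff two_ne_zero, mul_comm]
    exact_mod_cast two_mul_sum_range_choose_sq_mul_sub n
  have hmean : ∑ k ∈ range (n + 1), (n.choose k : ℝ) ^ 2 / n.centralBinom * (s + (n - k) : ℕ) =
      s + n / 2 := by
    simp only [Nat.cast_add, div_mul_eq_mul_div, mul_add, ← sum_div, sum_add_distrib, ← sum_mul,
      hsum, hsum_mul]
    field_simp
  have hmean_ge : (n : ℝ) - 1 ≤ s + n / 2 := by
    have : (n : ℝ) ≤ 2 * (s + 1) := by exact_mod_cast hs
    linarith
  have hjensen := descPochhammer_eval_div_factorial_le_sum_choose hn (t := range (n + 1))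
    (fun k => s + (n - k)) (fun k => (n.choose k : ℝ) ^ 2 / n.centralBinom)
    (fun _ _ => by positivity) (by rw [← sum_div, hsum, div_self hC.ne']) (hmean ▸ hmean_ge)
  simp only [hmean] at hjensen
  simp only [div_mul_eq_mul_div, ← sum_div] at hjensen
  rwa [mul_comm, ← le_div_iff₀ hC]

lemma add_half_mul_log_one_add_inv_le {x : ℝ} (hx : 0 < x) :
    (x + 1 / 2) * Real.log (1 + x⁻¹) ≤ 1 + 1 / (12 * x * (x + 1)) := by
  set q : ℝ := (1 / (2 * x + 1)) ^ 2 with hq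
  have hq_lt : q < 1 := by
    rw [hq, sq_lt_one_iff₀ (by positivity), div_lt_one (by positivity)]
    linarith
  have hlog : HasSum (fun k : ℕ => 1 / (2 * (k : ℝ) + 1) * q ^ k)
      ((x + 1 / 2) * Real.log (1 + x⁻¹)) := by
    convert! (Real.hasSum_log_one_add_inv hx).mul_left (x + 1 / 2) using 2 with k
    rw [pow_succ, pow_mul, ← hq]
    field_simp
  have hgeom : HasSum (fun k : ℕ => q ^ (k + 1) / 3) (1 / (12 * x * (x + 1))) := by
    convert! ((hasSum_geometric_of_lt_one (by positivity) hq_lt).mul_right q).div_const 3 using 1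
    have hsub : 1 - q = 4 * x * (x + 1) * q := by rw [hq]; field_simp; ring
    rw [hsub, hq]
    field_simp
    norm_num
  have hhead : 1 / (2 * ((0 : ℕ) : ℝ) + 1) * q ^ 0 = 1 := by norm_num
  have htail := (hasSum_nat_add_iff' 1).2 hlog
  rw [sum_range_one, hhead] at htail
  have hterm : ∀ k : ℕ, 1 / (2 * ((k + 1 : ℕ) : ℝ) + 1) * q ^ (k + 1) ≤ q ^ (k + 1) / 3 := by
    intro k
    rw [one_div_mul_eq_div]
    gcongr
    push_cast
    linarith [Nat.cast_nonneg (α := ℝ) k]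
  exact sub_le_iff_le_add'.1 (hasSum_le hterm htail hgeom)

/-- Stirling's approximation to `log Γ(x) - log √(2π)`, for `x > 0`, up to its `1 / (12 x)` term;
its differences bound the logarithms of rising factorials from below. -/
noncomputable def stirlingLogGamma (x : ℝ) : ℝ := (x - 1 / 2) * Real.log x - x + 1 / (12 * x)

lemma stirlingLogGamma_add_one_sub_le_log {x : ℝ} (hx : 0 < x) :
    stirlingLogGamma (x + 1) - stirlingLogGamma x ≤ Real.log x := by
  have hlog : Real.log (1 + x⁻¹) = Real.log (x + 1) - Real.log x := by
    rw [← Real.log_div (by positivity) hx.ne', add_div, div_self hx.ne', one_div]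
  have hcorrection : 1 / (12 * x * (x + 1)) = 1 / (12 * x) - 1 / (12 * (x + 1)) := by
    field_simp
    ring
  have h := add_half_mul_log_one_add_inv_le hx
  rw [hlog, hcorrection] at h
  unfold stirlingLogGamma
  linarith

lemma exp_stirlingLogGamma_sub_le_ascPochhammer {x : ℝ} (hx : 0 < x) (n : ℕ) :
    Real.exp (stirlingLogGamma (x + n) - stirlingLogGamma x) ≤ (ascPochhammer ℝ n).eval x := by
  induction n with
  | zero => simp
  | succ n ih =>
    have hxn : 0 < x + n := by positivity
    calc Real.exp (stirlingLogGamma (x + (n + 1 : ℕ)) - stirlingLogGamma x)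
        = Real.exp (stirlingLogGamma (x + n) - stirlingLogGamma x) *
            Real.exp (stirlingLogGamma (x + n + 1) - stirlingLogGamma (x + n)) := by
          rw [← Real.exp_add]
          push_cast
          ring_nf
      _ ≤ (ascPochhammer ℝ n).eval x * (x + n) := by
          gcongr
          · exact (ascPochhammer_pos n x hx).le
          · exact (Real.le_log_iff_exp_le hxn).1 (stirlingLogGamma_add_one_sub_le_log hxn)
      _ = (ascPochhammer ℝ (n + 1)).eval x := (ascPochhammer_succ_eval n x).symm

lemma le_add_of_tendsto_of_sub_succ_le {f g : ℕ → ℝ} {a : ℝ} {n : ℕ}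
    (hf : Tendsto f atTop (𝓝 a)) (hg : Tendsto g atTop (𝓝 0))
    (h : ∀ m ≥ n, f m - f (m + 1) ≤ g m - g (m + 1)) : f n ≤ a + g n := by
  have hmono : Monotone fun k => f (k + n) - g (k + n) :=
    monotone_nat_of_le_succ fun k => by
      rw [Nat.add_right_comm]
      linarith [h (k + n) (Nat.le_add_left n k)]
  have hlim := (tendsto_add_atTop_iff_nat n).2 (hf.sub hg)
  have h_le : f (0 + n) - g (0 + n) ≤ a - 0 := hmono.ge_of_tendsto hlim 0
  rw [zero_add] at h_le
  linarith

lemma tendsto_one_div_const_mul_natCast (c : ℝ) :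
    Tendsto (fun n : ℕ => 1 / (c * n)) atTop (𝓝 0) := by
  simpa [mul_comm] using (tendsto_inv_atTop_nhds_zero_nat (𝕜 := ℝ)).mul_const c⁻¹

lemma one_div_mul_sub_one_div_mul_succ {c : ℝ} (hc : c ≠ 0) {m : ℕ} (hm : m ≠ 0) :
    1 / (c * m) - 1 / (c * (m + 1 : ℕ)) = 1 / (c * m * (m + 1)) := by
  push_cast
  field_simp
  ring

lemma factorial_le_stirling_mul_exp {n : ℕ} (hn : n ≠ 0) :
    (n ! : ℝ) ≤ √(2 * Real.pi * n) * (n / Real.exp 1) ^ n * Real.exp (1 / (12 * n)) := by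
  have hpos : 0 < Stirling.stirlingSeq n := by
    rw [Stirling.stirlingSeq]
    positivity
  have hlog : Real.log (Stirling.stirlingSeq n) ≤ Real.log √Real.pi + 1 / (12 * n) := by
    refine le_add_of_tendsto_of_sub_succ_le (f := fun m => Real.log (Stirling.stirlingSeq m))
      (Stirling.tendsto_stirlingSeq_sqrt_pi.log (by positivity))
      (tendsto_one_div_const_mul_natCast 12) fun m hm => ?_
    rw [one_div_mul_sub_one_div_mul_succ (by norm_num) (by omega)]
    exact Stirling.log_stirlingSeq_sdiff_le m
  rw [Real.log_le_iff_le_exp hpos, Real.exp_add, Real.exp_log (by positivity), Stirling.stirlingSeq,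
    div_le_iff₀ (by positivity)] at hlog
  refine hlog.trans_eq ?_
  rw [mul_right_comm 2, Real.sqrt_mul' _ Real.pi_nonneg]
  ring

open Real.Wallis in
lemma wallis_mul_le {n : ℕ} (hn : n ≠ 0) :
    W n * (2 * n + 1) ≤ Real.pi * n * Real.exp (1 / (4 * n)) := by
  have hlim : Tendsto (fun m : ℕ => Real.log (W m * (2 + 1 / m))) atTop (𝓝 (Real.log Real.pi)) := by
    refine Tendsto.log ?_ Real.pi_ne_zero
    convert! tendsto_W_nhds_pi_div_two.mul
      ((tendsto_one_div_atTop_nhds_zero_nat (𝕜 := ℝ)).const_add 2) using 2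
    ring
  have hstep : ∀ m ≥ n,
      Real.log (W m * (2 + 1 / m)) - Real.log (W (m + 1) * (2 + 1 / (m + 1 : ℕ))) ≤
        1 / (4 * m) - 1 / (4 * (m + 1 : ℕ)) := by
    intro m hm
    have hm0 : m ≠ 0 := by omega
    have hW := W_pos m
    have hW' := W_pos (m + 1)
    have hratio : W m * (2 + 1 / m) / (W (m + 1) * (2 + 1 / (m + 1 : ℕ))) =
        1 + 1 / (4 * m * (m + 1)) := by
      rw [W_succ]
      push_cast
      field_simp
      ring
    rw [one_div_mul_sub_one_div_mul_succ (by norm_num) hm0,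
      ← Real.log_div (by positivity) (by positivity), hratio]
    exact (Real.log_le_sub_one_of_pos (by positivity)).trans_eq (add_sub_cancel_left _ _)
  have hlog := le_add_of_tendsto_of_sub_succ_le hlim (tendsto_one_div_const_mul_natCast 4) hstep
  have hW := W_pos n
  rw [Real.log_le_iff_le_exp (by positivity), Real.exp_add, Real.exp_log Real.pi_pos] at hlog
  calc W n * (2 * n + 1) = W n * (2 + 1 / n) * n := by field_simp
    _ ≤ Real.pi * Real.exp (1 / (4 * n)) * n := by gcongr
    _ = Real.pi * n * Real.exp (1 / (4 * n)) := by ring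

lemma centralBinom_sq_mul_wallis (n : ℕ) :
    (n.centralBinom : ℝ) ^ 2 * (Real.Wallis.W n * (2 * n + 1)) = (4 ^ n) ^ 2 := by
  have hfour : (4 : ℝ) ^ n = 2 ^ (2 * n) := by rw [pow_mul]; norm_num
  rw [Real.Wallis.W_eq_factorial_ratio, Nat.centralBinom_eq_two_mul_choose,
    Nat.cast_choose ℝ (by omega), two_mul n, Nat.add_sub_cancel, hfour]
  field_simp
  ring

lemma four_pow_div_sqrt_mul_exp_le_centralBinom {n : ℕ} (hn : n ≠ 0) :
    4 ^ n / √(Real.pi * n) * Real.exp (-(1 / (8 * n))) ≤ n.centralBinom := by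
  refine le_of_sq_le_sq ?_ (by positivity)
  have hexp : Real.exp (-(1 / (8 * n))) ^ 2 = (Real.exp (1 / (4 * n)))⁻¹ := by
    rw [← Real.exp_nat_mul, ← Real.exp_neg]
    congr 1
    push_cast
    field_simp
    norm_num
  rw [mul_pow, div_pow, Real.sq_sqrt (by positivity), hexp, ← div_eq_mul_inv, div_div,
    div_le_iff₀ (by positivity), ← centralBinom_sq_mul_wallis]
  exact mul_le_mul_of_nonneg_left (wallis_mul_le hn) (sq_nonneg _)

lemma mul_exp_le_centralBinom_div_factorial {n : ℕ} (hn : n ≠ 0) :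
    1 / (√2 * Real.pi * n) * (4 ^ n / (n / Real.exp 1) ^ n) * Real.exp (-(5 / (24 * n))) ≤
      n.centralBinom / n ! := by
  have hsqrt : √(Real.pi * n) * √(2 * Real.pi * n) = √2 * Real.pi * n := by
    rw [mul_assoc 2, Real.sqrt_mul zero_le_two, mul_left_comm, Real.mul_self_sqrt (by positivity),
      mul_assoc]
  have hexp : Real.exp (-(5 / (24 * n))) =
      Real.exp (-(1 / (8 * n))) / Real.exp (1 / (12 * n)) := by
    rw [← Real.exp_sub]
    congr 1
    field_simp
    norm_num
  calc 1 / (√2 * Real.pi * n) * (4 ^ n / (n / Real.exp 1) ^ n) * Real.exp (-(5 / (24 * n)))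
      = 4 ^ n / √(Real.pi * n) * Real.exp (-(1 / (8 * n))) /
          (√(2 * Real.pi * n) * (n / Real.exp 1) ^ n * Real.exp (1 / (12 * n))) := by
        rw [← hsqrt, hexp]
        field_simp
    _ ≤ n.centralBinom / n ! := by
        gcongr
        · exact four_pow_div_sqrt_mul_exp_le_centralBinom hn
        · exact factorial_le_stirling_mul_exp hn

lemma exp_stirlingLogGamma_sub_eq {n : ℕ} {r : ℝ} (hn : n ≠ 0) (hr : 2 < r) :
    4 ^ n / (n / Real.exp 1) ^ n *
        Real.exp (stirlingLogGamma (n * (r - 2) / 4 + n) - stirlingLogGamma (n * (r - 2) / 4)) =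
      √((r - 2) / (r + 2)) * ((r + 2) ^ (r + 2) / (r - 2) ^ (r - 2)) ^ ((n : ℝ) / 4) *
        Real.exp (-(4 / (3 * n * (r ^ 2 - 4)))) := by
  have : 0 < r - 2 := by linarith
  have : 0 < r + 2 := by linarith
  have : 0 < r ^ 2 - 4 := by nlinarith
  refine Real.log_injOn_pos (Set.mem_Ioi.2 (by positivity)) (Set.mem_Ioi.2 (by positivity)) ?_
  have hx : n * (r - 2) / 4 + n = n * (r + 2) / 4 := by ring
  have hcorrection : 1 / (12 * (n * (r + 2) / 4)) - 1 / (12 * (n * (r - 2) / 4)) =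
      -(4 / (3 * n * (r ^ 2 - 4))) := by
    have : r ^ 2 - 4 = (r - 2) * (r + 2) := by ring
    rw [this]
    field_simp
    ring
  simp (disch := positivity) only [Real.log_mul, Real.log_div, Real.log_pow, Real.log_rpow,
    Real.log_sqrt, Real.log_exp, stirlingLogGamma, hx, ← hcorrection]
  ring

lemma le_ncard_signedSumBox_self {ι : Type*} [Fintype ι] [Nonempty ι] {s : ℕ} {x : ℝ} (hx : 0 < x)
    (hxs : x + Fintype.card ι ≤ s + Fintype.card ι / 2 + 1) :
    (Fintype.card ι).centralBinom / (Fintype.card ι)! *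
      Real.exp (stirlingLogGamma (x + Fintype.card ι) - stirlingLogGamma x) ≤
      (signedSumBox ι s s).ncard := by
  set n := Fintype.card ι
  have hns : n ≤ 2 * (s + 1) := by
    have : (n : ℝ) ≤ 2 * (s + 1) := by linarith
    exact_mod_cast this
  calc n.centralBinom / (n ! : ℝ) * Real.exp (stirlingLogGamma (x + n) - stirlingLogGamma x)
      ≤ n.centralBinom / (n ! : ℝ) * (ascPochhammer ℝ n).eval x := by
        gcongr
        exact exp_stirlingLogGamma_sub_le_ascPochhammer hx n
    _ = n.centralBinom * ((descPochhammer ℝ n).eval (x + n - 1) / n !) := by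
        rw [descPochhammer_eval_eq_ascPochhammer]
        ring_nf
    _ ≤ n.centralBinom * ((descPochhammer ℝ n).eval (s + n / 2 : ℝ) / n !) := by
        gcongr
        exact monotoneOn_descPochhammer_eval n (Set.mem_Ici.2 (by linarith))
          (Set.mem_Ici.2 (by linarith)) (by linarith)
    _ ≤ (signedSumBox ι s s).ncard := by
        rw [ncard_signedSumBox_self]
        exact_mod_cast centralBinom_mul_descPochhammer_div_factorial_le Fintype.card_ne_zero hns

theorem stmt_19_general {D s : ℕ} {r : ℝ} (hD : D ≠ 0) (hr : 2 < r) (hs : D * r ≤ 4 * (s + 1)) :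
    1 / (√2 * Real.pi * D) * √((r - 2) / (r + 2)) *
        ((r + 2) ^ (r + 2) / (r - 2) ^ (r - 2)) ^ ((D : ℝ) / 4) *
        Real.exp (-(5 / (24 * D)) * ((r ^ 2 + 4) / (r ^ 2 - 4))) <
      (signedSumBox (Fin D) s s).ncard := by
  have : NeZero D := ⟨hD⟩
  have : 0 < r - 2 := by linarith
  have : 0 < r ^ 2 - 4 := by nlinarith
  have hexponent : -(5 / (24 * D)) * ((r ^ 2 + 4) / (r ^ 2 - 4)) <
      -(5 / (24 * D)) + -(4 / (3 * D * (r ^ 2 - 4))) := by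
    calc -(5 / (24 * D)) * ((r ^ 2 + 4) / (r ^ 2 - 4))
        = -(5 / (24 * D)) + -(5 / (3 * D * (r ^ 2 - 4))) := by
          field_simp
          ring
      _ < -(5 / (24 * D)) + -(4 / (3 * D * (r ^ 2 - 4))) := by
          gcongr
          norm_num
  set x : ℝ := D * (r - 2) / 4
  calc 1 / (√2 * Real.pi * D) * √((r - 2) / (r + 2)) *
        ((r + 2) ^ (r + 2) / (r - 2) ^ (r - 2)) ^ ((D : ℝ) / 4) *
        Real.exp (-(5 / (24 * D)) * ((r ^ 2 + 4) / (r ^ 2 - 4)))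
      < 1 / (√2 * Real.pi * D) * √((r - 2) / (r + 2)) *
        ((r + 2) ^ (r + 2) / (r - 2) ^ (r - 2)) ^ ((D : ℝ) / 4) *
        Real.exp (-(5 / (24 * D)) + -(4 / (3 * D * (r ^ 2 - 4)))) := by gcongr
    _ = 1 / (√2 * Real.pi * D) * (4 ^ D / (D / Real.exp 1) ^ D) * Real.exp (-(5 / (24 * D))) *
          Real.exp (stirlingLogGamma (x + D) - stirlingLogGamma x) := by
        have h := exp_stirlingLogGamma_sub_eq hD hr
        rw [Real.exp_add]
        linear_combination - (1 / (√2 * Real.pi * D) * Real.exp (-(5 / (24 * D)))) * h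
    _ ≤ D.centralBinom / D ! * Real.exp (stirlingLogGamma (x + D) - stirlingLogGamma x) := by
        gcongr
        exact mul_exp_le_centralBinom_div_factorial hD
    _ ≤ (signedSumBox (Fin D) s s).ncard := by
        have h := le_ncard_signedSumBox_self (ι := Fin D) (s := s) (x := x) (by positivity)
        rw [Fintype.card_fin] at h
        exact h (by simp only [x]; linarith)

theorem stmt_19 (D r : ℕ) (hD : 2 ≤ D) (hr : 3 ≤ r) :
    (Set.ncard {u : Fin D → ℤ |
        (∑ j, max (u j) 0) ≤ ((D * r / 4 : ℕ) : ℤ) ∧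
        (∑ j, max (-u j) 0) ≤ ((D * r / 4 : ℕ) : ℤ)} : ℝ)
      > (1 / (Real.sqrt 2 * Real.pi * D))
          * Real.sqrt (((r : ℝ) - 2) / ((r : ℝ) + 2))
          * ((((r : ℝ) + 2) ^ (r + 2) / ((r : ℝ) - 2) ^ (r - 2)) ^ ((D : ℝ) / 4))
          * Real.exp (-(5 / (24 * (D : ℝ))) * (((r : ℝ) ^ 2 + 4) / ((r : ℝ) ^ 2 - 4))) := by
  have hfloor : (D * r : ℝ) ≤ 4 * ((D * r / 4 : ℕ) + 1) := by exact_mod_cast (by omega)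
  simpa only [gt_iff_lt, signedSumBox, ← Real.rpow_natCast, Nat.cast_add, Nat.cast_ofNat,
    Nat.cast_sub (show 2 ≤ r by omega)]
    using stmt_19_general (by omega) (by exact_mod_cast hr) hfloor
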